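/- Let u : [0, ∞) → ℝ be differentiable with u′(t) = 2·u(t)·(1 − u(t)) for all t ≥ 0 and u(0) > 0. Then u(t) > 0 for all t ≥ 0 and u(t) → 1 as t → ∞. -/

import Mathlib

open Filter

/-- The solution of `u′ = 2u(1 − u)` with initial value `c`. -/
noncomputable def logisticSolution (c t : ℝ) : ℝ :=
  c / (c + (1 - c) * Real.exp (-2 * t))

lemma logisticSolution_denom_pos {c t : ℝ} (hc : 0 < c) (ht : 0 ≤ t) :
    0 < c + (1 - c) * Real.exp (-2 * t) := by
  have hexp : Real.exp (-2 * t) ≤ 1 := Real.exp_le_one_iff.mpr (by linarith)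
  nlinarith [Real.exp_pos (-2 * t), mul_nonneg hc.le (sub_nonneg.mpr hexp)]

lemma logisticSolution_pos {c t : ℝ} (hc : 0 < c) (ht : 0 ≤ t) : 0 < logisticSolution c t :=
  div_pos hc (logisticSolution_denom_pos hc ht)

lemma hasDerivAt_logisticSolution {c t : ℝ} (hc : 0 < c) (ht : 0 ≤ t) :
    HasDerivAt (logisticSolution c)
      (2 * logisticSolution c t * (1 - logisticSolution c t)) t := by
  have hne := (logisticSolution_denom_pos hc ht).ne'
  have hexp : HasDerivAt (fun s : ℝ => Real.exp (-2 * s)) (Real.exp (-2 * t) * (-2 * 1)) t :=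
    ((hasDerivAt_id t).const_mul (-2)).exp
  refine ((hasDerivAt_const t c).div ((hexp.const_mul (1 - c)).const_add c) hne).congr_deriv ?_
  unfold logisticSolution
  generalize Real.exp (-2 * t) = e at hne ⊢
  field_simp
  ring

lemma tendsto_logisticSolution {c : ℝ} (hc : 0 < c) :
    Tendsto (logisticSolution c) atTop (nhds 1) := by
  have hexp : Tendsto (fun t : ℝ => Real.exp (-2 * t)) atTop (nhds 0) :=
    Real.tendsto_exp_atBot.comp (tendsto_id.const_mul_atTop_of_neg (by norm_num))
  have hdenom : Tendsto (fun t : ℝ => c + (1 - c) * Real.exp (-2 * t)) atTop (nhds c) := by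
    simpa using (hexp.const_mul (1 - c)).const_add c
  have hquot := (tendsto_const_nhds (x := c)).div hdenom hc.ne'
  rwa [div_self hc.ne'] at hquot

lemma lipschitzOnWith_logistic (M : NNReal) :
    LipschitzOnWith (2 * (1 + 2 * M)) (fun x : ℝ => 2 * x * (1 - x)) {x | |x| ≤ M} := by
  refine LipschitzOnWith.of_dist_le_mul fun x hx y hy => ?_
  have hfactor : 2 * x * (1 - x) - 2 * y * (1 - y) = 2 * (1 - x - y) * (x - y) := by ring
  rw [Real.dist_eq, Real.dist_eq, hfactor, abs_mul]
  refine mul_le_mul_of_nonneg_right ?_ (abs_nonneg _)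
  rw [Set.mem_ofPred_eq, abs_le] at hx hy
  push_cast
  exact abs_le.mpr ⟨by linarith, by linarith⟩

/-- Uniqueness for the logistic equation on `[0, ∞)`. -/
lemma logistic_unique {u v : ℝ → ℝ}
    (hu : ∀ t : ℝ, 0 ≤ t → HasDerivAt u (2 * u t * (1 - u t)) t)
    (hv : ∀ t : ℝ, 0 ≤ t → HasDerivAt v (2 * v t * (1 - v t)) t)
    (h0 : u 0 = v 0) {t : ℝ} (ht : 0 ≤ t) : u t = v t := by
  have hcu : ContinuousOn u (Set.Icc 0 t) := fun s hs =>
    (hu s hs.1).continuousAt.continuousWithinAt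
  have hcv : ContinuousOn v (Set.Icc 0 t) := fun s hs =>
    (hv s hs.1).continuousAt.continuousWithinAt
  obtain ⟨A, hA⟩ := isCompact_Icc.exists_bound_of_continuousOn hcu
  obtain ⟨B, hB⟩ := isCompact_Icc.exists_bound_of_continuousOn hcv
  have hAM : A ≤ (max A B).toNNReal := (le_max_left A B).trans (Real.le_coe_toNNReal _)
  have hBM : B ≤ (max A B).toNNReal := (le_max_right A B).trans (Real.le_coe_toNNReal _)
  exact ODE_solution_unique_of_mem_Icc_right (v := fun _ x => 2 * x * (1 - x))
    (fun _ _ => lipschitzOnWith_logistic (max A B).toNNReal)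
    hcu (fun s hs => (hu s hs.1).hasDerivWithinAt)
    (fun s hs => (hA s (Set.Ico_subset_Icc_self hs)).trans hAM)
    hcv (fun s hs => (hv s hs.1).hasDerivWithinAt)
    (fun s hs => (hB s (Set.Ico_subset_Icc_self hs)).trans hBM)
    h0 (Set.right_mem_Icc.mpr ht)

/-- any solution of the logistic equation `u′ = 2u(1 − u)` on
`[0, ∞)` with `u(0) > 0` stays positive and tends to `1`. -/
theorem logistic_tendsto_one (u : ℝ → ℝ)
    (hu : ∀ t : ℝ, 0 ≤ t → HasDerivAt u (2 * u t * (1 - u t)) t)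
    (h0 : 0 < u 0) :
    (∀ t : ℝ, 0 ≤ t → 0 < u t) ∧ Tendsto u atTop (nhds 1) := by
  have heq : ∀ t : ℝ, 0 ≤ t → u t = logisticSolution (u 0) t := fun t ht =>
    logistic_unique hu (fun s hs => hasDerivAt_logisticSolution h0 hs)
      (by simp [logisticSolution]) ht
  refine ⟨fun t ht => heq t ht ▸ logisticSolution_pos h0 ht, ?_⟩
  refine (tendsto_logisticSolution h0).congr' ?_
  filter_upwards [eventually_ge_atTop 0] with t ht using (heq t ht).symm
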